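/- Theorem 6.1(iii): with the notation of the context, for every hermitian matrix u one has (4/n)·Σ_α 𝓛_{e_α,u}·𝓛_{e_α} = −𝒳_u·𝒴_e + 𝒳_e·𝒴_u. -/

import Mathlib

open Matrix
open scoped ComplexOrder

/-- The Jordan product of two complex matrices. -/
noncomputable def jordanProd {n : ℕ} (a b : Matrix (Fin n) (Fin n) ℂ) :
    Matrix (Fin n) (Fin n) ℂ :=
  (1 / 2 : ℂ) • (a * b + b * a)

/-- The Jordan triple product `{uvw} = u∘(v∘w) − v∘(u∘w) + (u∘v)∘w`. -/
noncomputable def jTriple {n : ℕ} (u v w : Matrix (Fin n) (Fin n) ℂ) :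
    Matrix (Fin n) (Fin n) ℂ :=
  jordanProd u (jordanProd v w) - jordanProd v (jordanProd u w)
    + jordanProd (jordanProd u v) w

/-- The real inner product `⟨u|v⟩ = (1/n)·Re(tr(u·v))`. -/
noncomputable def jInner {n : ℕ} (u v : Matrix (Fin n) (Fin n) ℂ) : ℝ :=
  (1 / n : ℝ) * ((u * v).trace).re

/-- `𝒴_u = ⟨u|x⟩`. -/
noncomputable def Yfun {n : ℕ} (x u : Matrix (Fin n) (Fin n) ℂ) : ℝ :=
  jInner u x

/-- `𝓛_u = ⟨u∘x|π⟩`. -/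
noncomputable def Lfun {n : ℕ} (x p u : Matrix (Fin n) (Fin n) ℂ) : ℝ :=
  jInner (jordanProd u x) p

/-- `𝓛_{u,v} = ⟨u∘(v∘x) − v∘(u∘x)|π⟩ − μ·i·tr(x·[u,v])/(2·tr x)`. -/
noncomputable def LLfun {n : ℕ} (μ : ℝ) (x p u v : Matrix (Fin n) (Fin n) ℂ) : ℝ :=
  jInner (jordanProd u (jordanProd v x) - jordanProd v (jordanProd u x)) p
    - μ * (Complex.I * (x * (u * v - v * u)).trace).re / (2 * (x.trace).re)

/-- `𝒳_u = ⟨x|{πuπ}⟩ + n·μ²·Re(tr(x·u))/(tr x)² − μ·i·tr(x·[u,π])/(tr x)`. -/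
noncomputable def Xfun {n : ℕ} (μ : ℝ) (x p u : Matrix (Fin n) (Fin n) ℂ) : ℝ :=
  jInner x (jTriple p u p) + (n : ℝ) * μ ^ 2 * ((x * u).trace).re / ((x.trace).re) ^ 2
    - μ * (Complex.I * (x * (u * p - p * u)).trace).re / (x.trace).re

lemma trace_rot {n : ℕ} (a b c : Matrix (Fin n) (Fin n) ℂ) :
    (a * (b * c)).trace = (b * (c * a)).trace := by
  rw [trace_mul_comm, mul_assoc]

lemma LLform {n : ℕ} (μ : ℝ) (x p a u : Matrix (Fin n) (Fin n) ℂ) :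
    LLfun μ x p a u = (1 / n : ℝ) * (1/4) * ((a * (u * (x * p) - u * (p * x) - x * p * u + p * x * u)).trace).re
      - μ * (Complex.I * (a * (u * x - x * u)).trace).re / (2 * (x.trace).re) := by
  unfold LLfun jInner jordanProd
  have h1 : (x * (a * u - u * a)).trace = (a * (u * x - x * u)).trace := by
    simp only [mul_sub, trace_sub]
    rw [trace_rot x a u, trace_rot x u a, trace_rot u a x]
  have h2 : (((1 / 2 : ℂ) • (a * (1 / 2 : ℂ) • (u * x + x * u) + (1 / 2 : ℂ) • (u * x + x * u) * a) -
          (1 / 2 : ℂ) • (u * (1 / 2 : ℂ) • (a * x + x * a) + (1 / 2 : ℂ) • (a * x + x * a) * u)) * p).trace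
      = (1/4 : ℂ) * (a * (u * (x * p) - u * (p * x) - x * p * u + p * x * u)).trace := by
    have e1 : (u * (a * (x * p))).trace = (a * (x * (p * u))).trace := by
      rw [trace_mul_comm]; simp [mul_assoc]
    have e2 : (x * (u * (a * p))).trace = (a * (p * (x * u))).trace := by
      rw [← mul_assoc, trace_mul_comm]; simp [mul_assoc]
    have e3 : (x * (a * (u * p))).trace = (a * (u * (p * x))).trace := by
      rw [trace_mul_comm]; simp [mul_assoc]
    have e4 : (u * (x * (a * p))).trace = (a * (p * (u * x))).trace := by
      rw [← mul_assoc, trace_mul_comm]; simp [mul_assoc]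
    simp only [mul_sub, mul_add, sub_mul, add_mul, smul_mul_assoc, mul_smul_comm, smul_add, smul_sub,
      trace_sub, trace_add, trace_smul, mul_assoc, smul_eq_mul, e1, e2, e3, e4]
    ring
  rw [h1, h2]
  have : ((1/4 : ℂ) * (a * (u * (x * p) - u * (p * x) - x * p * u + p * x * u)).trace).re
    = 1/4 * ((a * (u * (x * p) - u * (p * x) - x * p * u + p * x * u)).trace).re := by
    rw [show (1/4:ℂ) = ((1/4:ℝ):ℂ) by norm_num, Complex.re_ofReal_mul]
  rw [this]; ring

lemma rank_one_sandwich {n : ℕ} (x y : Matrix (Fin n) (Fin n) ℂ) (hrank : x.rank = 1) :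
    x * y * x = (x * y).trace • x := by
  obtain ⟨a, ha, h⟩ := finrank_eq_one_iff'.1 hrank
  have h' : ∀ j, ∃ c : ℂ, ∀ i, x i j = a.1 i * c := by
    intro j
    obtain ⟨c, hc⟩ := h ⟨x.mulVecLin (Pi.single j 1), LinearMap.mem_range_self _ _⟩
    refine ⟨c, fun i => ?_⟩
    have := congrFun (congrArg Subtype.val hc) i
    simp [Matrix.mulVecLin_apply] at this
    rw [← this]; ring
  choose c hc using h'
  have hx : x = vecMulVec a.1 c := by
    ext i j; simp [vecMulVec_apply, hc j i]
  rw [hx, vecMulVec_mul, vecMulVec_mul_vecMulVec, trace_vecMulVec, dotProduct_comm]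
  ext i j
  simp [vecMulVec_apply]
  ring

lemma jTriple_self {n : ℕ} (p u : Matrix (Fin n) (Fin n) ℂ) :
    jTriple p u p = p * u * p := by
  unfold jTriple jordanProd
  simp only [mul_add, add_mul, smul_mul_assoc, mul_smul_comm, smul_add, mul_assoc]
  module

theorem quadratic_relation_iii
    (n : ℕ) (hn : 2 ≤ n) (μ : ℝ)
    (x : Matrix (Fin n) (Fin n) ℂ)
    (hherm : x.IsHermitian) (hpsd : x.PosSemidef) (hrank : x.rank = 1)
    (p w : Matrix (Fin n) (Fin n) ℂ) (hw : w.IsHermitian) (hp : p = jordanProd x w)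
    (E : Fin (n ^ 2) → Matrix (Fin n) (Fin n) ℂ)
    (hEherm : ∀ α, (E α).IsHermitian)
    (hEorth : ∀ α β, jInner (E α) (E β) = if α = β then 1 else 0)
    (hEspan : ∀ u : Matrix (Fin n) (Fin n) ℂ, u.IsHermitian →
      u = ∑ α, (jInner (E α) u : ℂ) • E α)
    (u : Matrix (Fin n) (Fin n) ℂ) (hu : u.IsHermitian)
    :
    (4 / (n : ℝ)) * (∑ α, LLfun μ x p (E α) u * Lfun x p (E α))
      = -(Xfun μ x p u * Yfun x 1) + Xfun μ x p 1 * Yfun x u := by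
  have hn0 : (n : ℝ) ≠ 0 := by positivity
  have hpH : p.IsHermitian := by
    rw [hp]; unfold jordanProd Matrix.IsHermitian
    simp [conjTranspose_add, conjTranspose_mul, hherm.eq, hw.eq, conjTranspose_smul, add_comm]
  have hreal : ∀ a b : Matrix (Fin n) (Fin n) ℂ, a.IsHermitian → b.IsHermitian →
      (a * b).trace.im = 0 := by
    intro a b ha hb
    have h : star (a * b).trace = (a * b).trace := by
      rw [← trace_conjTranspose, conjTranspose_mul, ha.eq, hb.eq, trace_mul_comm]
    exact Complex.conj_eq_iff_im.1 h
  have ht0 : x.trace.im = 0 := by simpa using hreal x 1 hherm isHermitian_one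
  have htn : x.trace ≠ 0 := by
    intro h
    rw [hpsd.trace_eq_zero_iff] at h
    simp [h] at hrank
  obtain ⟨t, ht⟩ : ∃ t : ℝ, x.trace = t := ⟨x.trace.re, by apply Complex.ext <;> simp [ht0]⟩
  have htR : t ≠ 0 := by rintro rfl; simp [ht] at htn
  obtain ⟨m, hm⟩ : ∃ m : ℝ, (x * u).trace = m :=
    ⟨(x * u).trace.re, by apply Complex.ext <;> simp [hreal x u hherm hu]⟩
  have hxx : x * x = (t : ℂ) • x := by
    have := rank_one_sandwich x 1 hrank
    simpa [ht] using this
  have hAH : (jordanProd x p).IsHermitian := by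
    unfold jordanProd Matrix.IsHermitian
    simp [conjTranspose_add, conjTranspose_mul, hherm.eq, hpH.eq, conjTranspose_smul, add_comm]
  have hL : ∀ a, Lfun x p a = jInner a (jordanProd x p) := by
    intro a
    unfold Lfun jInner jordanProd
    simp only [mul_add, add_mul, smul_mul_assoc, mul_smul_comm, trace_add, trace_smul, mul_assoc]
    rw [trace_rot x a p]
  have hsum : ∑ α, LLfun μ x p (E α) u * Lfun x p (E α) = LLfun μ x p (jordanProd x p) u := by
    conv_rhs => rw [hEspan _ hAH]
    simp only [LLform, hL]
    simp only [Finset.sum_mul, trace_sum, smul_mul_assoc, trace_smul, smul_eq_mul, Finset.mul_sum,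
      Complex.re_sum, Finset.sum_div, ← Finset.sum_sub_distrib]
    refine Finset.sum_congr rfl fun α _ => ?_
    rw [mul_left_comm Complex.I, Complex.re_ofReal_mul, Complex.re_ofReal_mul]
    ring
  have hq : x * (p * (p * x)) = (x * (p * p)).trace • x := by
    rw [← rank_one_sandwich x (p * p) hrank]; simp [mul_assoc]
  have hT1 : (jordanProd x p * (u * (x * p) - u * (p * x) - x * p * u + p * x * u)).trace
      = (x * (p * p)).trace * m - t * (x * (p * (u * p))).trace := by
    have e : (jordanProd x p * (u * (x * p) - u * (p * x) - x * p * u + p * x * u)).trace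
        = (u * (x * (p * (p * x)) - p * (x * x) * p)).trace := by
      have r : ∀ a b : Matrix (Fin n) (Fin n) ℂ, (a * (u * b)).trace = (u * (b * a)).trace :=
        fun a b => trace_rot a u b
      have r2 : ∀ a b c d : Matrix (Fin n) (Fin n) ℂ,
          (a * (b * (u * (c * d)))).trace = (u * (c * (d * (a * b)))).trace := by
        intro a b c d
        rw [← mul_assoc a b, trace_rot]; simp [mul_assoc]
      have r4 : ∀ a b c d : Matrix (Fin n) (Fin n) ℂ,
          (a * (b * (c * (d * u)))).trace = (u * (a * (b * (c * d)))).trace := by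
        intro a b c d
        rw [trace_mul_comm u]; simp [mul_assoc]
      unfold jordanProd
      simp only [mul_sub, mul_add, sub_mul, add_mul, smul_mul_assoc, smul_add, smul_sub,
        trace_sub, trace_add, trace_smul, mul_assoc, smul_eq_mul, r2, r4]
      ring
    rw [e, hq, hxx, ← hm, trace_mul_comm x u]
    simp only [mul_sub, smul_mul_assoc, mul_smul_comm, trace_sub, trace_smul, smul_eq_mul]
    congr 2
    rw [← mul_assoc x p, trace_rot (x * p) u p]
    simp [mul_assoc]
  have hT2 : (jordanProd x p * (u * x - x * u)).trace
      = t / 2 * (x * (p * u - u * p)).trace := by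
    have e : (jordanProd x p * (u * x - x * u)).trace
        = 1 / 2 * ((u * ((x * x) * p)).trace - (u * (p * (x * x))).trace) := by
      have r2 : ∀ a b c : Matrix (Fin n) (Fin n) ℂ,
          (a * (b * (u * c))).trace = (u * (c * (a * b))).trace := by
        intro a b c
        rw [← mul_assoc a b, trace_rot]
      have r4 : ∀ a b c : Matrix (Fin n) (Fin n) ℂ,
          (a * (b * (c * u))).trace = (u * (a * (b * c))).trace := by
        intro a b c
        rw [trace_mul_comm u]; simp [mul_assoc]
      unfold jordanProd
      simp only [mul_sub, mul_add, sub_mul, add_mul, smul_mul_assoc, smul_add, smul_sub,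
        trace_sub, trace_add, trace_smul, mul_assoc, smul_eq_mul, r2, r4]
      ring
    rw [e, hxx]
    simp only [mul_sub, smul_mul_assoc, mul_smul_comm, trace_sub, trace_smul, smul_eq_mul]
    rw [← trace_rot p u x, ← trace_rot x u p, ← trace_rot x p u]
    ring
  rw [hsum, LLform, hT1, hT2]
  unfold Xfun Yfun jInner
  rw [jTriple_self, jTriple_self, trace_mul_comm u x]
  simp only [mul_one, one_mul, sub_self, mul_zero, trace_zero, ht, hm, Complex.ofReal_re, mul_assoc p u p]
  have hneg : (x * (u * p - p * u)).trace = - (x * (p * u - u * p)).trace := by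
    rw [← trace_neg, ← mul_neg, neg_sub]
  rw [hneg]
  generalize (x * (p * u - u * p)).trace = z
  generalize (x * (p * p)).trace = q
  generalize (x * (p * (u * p))).trace = r
  have h2 : (Complex.I * ((t : ℂ) / 2 * z)).re = t / 2 * (Complex.I * z).re := by
    rw [mul_left_comm, show (t : ℂ) / 2 = ((t / 2 : ℝ) : ℂ) by push_cast; rfl, Complex.re_ofReal_mul]
  rw [h2]
  simp only [Complex.sub_re, Complex.re_ofReal_mul, Complex.re_mul_ofReal, mul_neg, Complex.neg_re, Complex.zero_re]
  field_simp
  ring
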